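/- Let β ~ N(0, Σ_T) be independent of n i.i.d. pairs (x_j, ε_j) with x_j ~ N(0, Σ_F), ε_j ~ N(0, σ²), and y_j = x_jᵀβ + ε_j. With b̂ = n^{−1} Σ_j y_j x_j, one has E[b̂ b̂ᵀ] = Σ_F Σ_T Σ_F + n^{−1}(Σ_F Σ_T Σ_F + tr(Σ_T Σ_F) Σ_F + σ² Σ_F). -/

import Mathlib

open Matrix MeasureTheory ProbabilityTheory
open scoped NNReal

/-!
Conditionally on `β`, the estimator is the mean of `n` i.i.d. vectors `y_j x_j`, so its second
moment is `m mᵀ + n⁻¹ C`, where `m = Σ_F β` and `C` are the mean and covariance of one of them.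
Expanding `y_j` in `C` leaves a fourth moment of the Gaussian vector `x_j`. Isserlis' theorem, which
follows by polarization from `E[u⁴] = 3 E[u²]²` for centered Gaussian `u`, expresses it through
`Σ_F`. The result is a quadratic polynomial in `β`, so averaging over `β` involves only `E[β βᵀ]`.
-/

section GaussianMoments

open scoped Nat

lemma iteratedDeriv_ofReal_comp {f : ℝ → ℝ} {n : ℕ} {t : ℝ} (hf : ContDiffAt ℝ n f t) :
    iteratedDeriv n (fun s ↦ (f s : ℂ)) t = iteratedDeriv n f t := by
  rw [iteratedDeriv, iteratedDeriv]
  exact congr($(Complex.ofRealCLM.iteratedFDeriv_comp_left hf le_rfl) fun _ ↦ 1)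

lemma integral_pow_two_mul_gaussianReal_zero_one (n : ℕ) :
    ∫ x, x ^ (2 * n) ∂gaussianReal 0 1 = (2 * n - 1)‼ := by
  have charFun_eq : charFun (gaussianReal 0 1) =
      fun t : ℝ ↦ ((Real.exp (-(t ^ 2 / 2)) : ℝ) : ℂ) := by
    ext t
    simp [charFun_gaussianReal]
  have hermite_zero : Polynomial.aeval (0 : ℝ) (Polynomial.hermite (2 * n)) =
      (-1) ^ n * (2 * n - 1)‼ := by
    rw [← Polynomial.coeff_zero_eq_aeval_zero', ← add_zero (2 * n),
      Polynomial.coeff_hermite_explicit]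
    simp
  have deriv_zero : iteratedDeriv (2 * n) (charFun (gaussianReal 0 1)) 0 =
      (((-1) ^ n * (2 * n - 1)‼ : ℝ) : ℂ) := by
    rw [charFun_eq, iteratedDeriv_ofReal_comp (by fun_prop), iteratedDeriv_eq_iterate,
      Polynomial.deriv_gaussian_eq_hermite_mul_gaussian, hermite_zero]
    simp
  have moment := iteratedDeriv_charFun_zero (μ := gaussianReal 0 1) (n := 2 * n)
    (mod_cast memLp_id_gaussianReal (2 * n))
  rw [deriv_zero, pow_mul, Complex.I_sq] at moment
  have sign_ne_zero : (-1 : ℂ) ^ n ≠ 0 := by simp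
  push_cast at moment
  exact_mod_cast (mul_left_cancel₀ sign_ne_zero moment).symm

lemma integral_pow_two_mul_gaussianReal (v : ℝ≥0) (n : ℕ) :
    ∫ x, x ^ (2 * n) ∂gaussianReal 0 v = (2 * n - 1)‼ * (v : ℝ) ^ n := by
  have scale : (gaussianReal 0 1).map (√(v : ℝ) * ·) = gaussianReal 0 v := by
    rw [gaussianReal_map_const_mul, mul_zero]
    congr 1
    ext
    exact (mul_one _).trans (Real.sq_sqrt v.coe_nonneg)
  rw [← scale, integral_map (by fun_prop) (by fun_prop)]
  simp_rw [mul_pow, integral_const_mul, integral_pow_two_mul_gaussianReal_zero_one]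
  rw [pow_mul, Real.sq_sqrt v.coe_nonneg, mul_comm]

lemma integral_pow_four_of_hasGaussianLaw {Ω : Type*} [MeasurableSpace Ω] {P : Measure Ω}
    {U : Ω → ℝ} (hU : HasGaussianLaw U P)
    (integral_eq_zero : ∫ ω, U ω ∂P = 0) :
    ∫ ω, U ω ^ 4 ∂P = 3 * (∫ ω, U ω ^ 2 ∂P) ^ 2 := by
  have even_moment (n : ℕ) :
      ∫ ω, U ω ^ (2 * n) ∂P = (2 * n - 1)‼ * (Var[U; P].toNNReal : ℝ) ^ n := by
    rw [← integral_pow_two_mul_gaussianReal, ← integral_eq_zero, ← hU.map_eq_gaussianReal,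
      integral_map hU.aemeasurable (by fun_prop)]
  rw [even_moment 1, even_moment 2]
  norm_num [Nat.doubleFactorial]

end GaussianMoments

section SecondMoment

variable {Ω ι κ : Type*} [MeasurableSpace Ω] [Fintype ι] {P : Measure Ω}

/-- The random vector `X` is square-integrable under `P`, with second moment `E[X Xᵀ] = M`. -/
structure HasSecondMoment (X : Ω → ι → ℝ) (M : Matrix ι ι ℝ) (P : Measure Ω) : Prop where
  memLp : MemLp X 2 P
  integral_mul : ∀ i j, ∫ ω, X ω i * X ω j ∂P = M i j

namespace HasSecondMoment

variable {X : Ω → ι → ℝ} {M : Matrix ι ι ℝ}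

lemma isSymm (hX : HasSecondMoment X M P) : M.IsSymm := by
  ext i j
  simp only [transpose_apply, ← hX.integral_mul, mul_comm]

lemma integral_dotProduct_mulVec (hX : HasSecondMoment X M P) (A : Matrix ι ι ℝ) :
    ∫ ω, X ω ⬝ᵥ A *ᵥ X ω ∂P = (A * M).trace := by
  have integrable (i j : ι) : Integrable (fun ω ↦ A i j * (X ω i * X ω j)) P :=
    ((hX.memLp.eval i).integrable_mul (hX.memLp.eval j)).const_mul _
  simp only [dotProduct, mulVec, Finset.mul_sum, mul_left_comm (X _ _) (A _ _), trace, diag,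
    mul_apply]
  rw [integral_finsetSum _ fun i _ ↦ integrable_finsetSum _ fun j _ ↦ integrable i j]
  refine Finset.sum_congr rfl fun i _ ↦ ?_
  rw [integral_finsetSum _ fun j _ ↦ integrable i j]
  simp_rw [integral_const_mul, hX.integral_mul, hX.isSymm.apply]

lemma integral_dotProduct_mul_dotProduct (hX : HasSecondMoment X M P) (a b : ι → ℝ) :
    ∫ ω, (a ⬝ᵥ X ω) * (b ⬝ᵥ X ω) ∂P = a ⬝ᵥ M *ᵥ b := by
  have quadratic_form (ω : Ω) :
      (a ⬝ᵥ X ω) * (b ⬝ᵥ X ω) = X ω ⬝ᵥ vecMulVec a b *ᵥ X ω := by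
    simp [vecMulVec_mulVec, dotProduct_comm a, mul_comm]
  simp_rw [quadratic_form, hX.integral_dotProduct_mulVec, vecMulVec_mul, trace_vecMulVec,
    ← mulVec_transpose, hX.isSymm.eq]

lemma mulVec [Fintype κ] (hX : HasSecondMoment X M P) (A : Matrix κ ι ℝ) :
    HasSecondMoment (fun ω ↦ A *ᵥ X ω) (A * M * Aᵀ) P where
  memLp := .of_eval fun i ↦
    memLp_finsetSum _ fun j _ ↦ (hX.memLp.eval j).const_mul (A i j)
  integral_mul i j := by
    rw [Matrix.mul_assoc]
    exact hX.integral_dotProduct_mul_dotProduct (A i) (A j)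

end HasSecondMoment

end SecondMoment

section ProductMeasure

lemma memLp_two_mul_prod {Ω Ω' : Type*} [MeasurableSpace Ω] [MeasurableSpace Ω'] {μ : Measure Ω}
    {ν : Measure Ω'} {f : Ω → ℝ} {g : Ω' → ℝ} (hf : MemLp f 2 μ) (hg : MemLp g 2 ν) :
    MemLp (fun z : Ω × Ω' ↦ f z.1 * g z.2) 2 (μ.prod ν) := by
  refine (memLp_two_iff_integrable_sq (hf.1.comp_fst.mul hg.1.comp_snd)).2 ?_
  simp_rw [Pi.mul_apply, mul_pow]
  exact hf.integrable_sq.mul_prod hg.integrable_sq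

variable {ι : Type*} [Fintype ι] {Ω : ι → Type*} [∀ i, MeasurableSpace (Ω i)]
  (μ : ∀ i, Measure (Ω i)) [∀ i, IsProbabilityMeasure (μ i)]

lemma hasLaw_eval_pi (i : ι) : HasLaw (fun z : ∀ i, Ω i ↦ z i) (μ i) (Measure.pi μ) :=
  (measurePreserving_eval μ i).hasLaw

lemma iIndepFun_eval_pi : iIndepFun (fun i (z : ∀ i, Ω i) ↦ z i) (Measure.pi μ) :=
  iIndepFun_pi (X := fun _ x ↦ x) fun _ ↦ aemeasurable_id

end ProductMeasure

section CenteredGaussianLaw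

variable {Ω ι κ : Type*} [MeasurableSpace Ω] [Fintype ι] {P : Measure Ω}

/-- The random vector `X` has law `N(0, M)` under `P`. The covariance matrix `M` may be singular; as
`X` is centered, it is also the second moment. -/
structure HasCenteredGaussianLaw (X : Ω → ι → ℝ) (M : Matrix ι ι ℝ) (P : Measure Ω) : Prop
    extends HasSecondMoment X M P where
  hasGaussianLaw : HasGaussianLaw X P
  integral_eq_zero : ∀ i, ∫ ω, X ω i ∂P = 0

lemma hasCenteredGaussianLaw_pi_gaussianReal [DecidableEq ι] :
    HasCenteredGaussianLaw (fun z : ι → ℝ ↦ z) 1 (Measure.pi fun _ ↦ gaussianReal 0 1) := by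
  have hasLaw (i : ι) := hasLaw_eval_pi (fun _ : ι ↦ gaussianReal 0 1) i
  refine ⟨⟨?memLp, ?integral_mul⟩, ?hasGaussianLaw, ?integral_eq_zero⟩
  case memLp => exact .of_eval fun i ↦
    (memLp_id_gaussianReal 2).comp_measurePreserving (measurePreserving_eval _ i)
  case integral_mul =>
    intro i j
    obtain rfl | hij := eq_or_ne i j
    · have second_moment : ∫ x, x ^ 2 ∂gaussianReal 0 1 = 1 := by
        simpa using integral_pow_two_mul_gaussianReal_zero_one 1
      simp_rw [one_apply_eq, ← pow_two]
      exact ((hasLaw i).integral_comp (f := fun x ↦ x ^ 2) (by fun_prop)).trans second_moment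
    · have indep := (iIndepFun_eval_pi fun _ : ι ↦ gaussianReal 0 1).indepFun hij
      rw [one_apply_ne hij, indep.integral_fun_mul_eq_mul_integral
        (measurable_pi_apply i).aestronglyMeasurable (measurable_pi_apply j).aestronglyMeasurable,
        (hasLaw i).integral_eq, integral_id_gaussianReal, zero_mul]
  case hasGaussianLaw =>
    exact (iIndepFun_eval_pi fun _ : ι ↦ gaussianReal 0 1).hasGaussianLaw fun i ↦
      (hasLaw i).hasGaussianLaw
  case integral_eq_zero => exact fun i ↦ (hasLaw i).integral_eq.trans integral_id_gaussianReal

lemma sum_signs_mul_pow_four (x y z w : ℝ) :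
    ∑ s ∈ ({1, -1} ×ˢ {1, -1} ×ˢ {1, -1} : Finset (ℝ × ℝ × ℝ)),
      s.1 * s.2.1 * s.2.2 * (x + s.1 * y + s.2.1 * z + s.2.2 * w) ^ 4 = 192 * (x * y * z * w) := by
  simp only [Finset.sum_product, Finset.sum_pair (show (1 : ℝ) ≠ -1 by norm_num)]
  ring

namespace HasCenteredGaussianLaw

variable {X : Ω → ι → ℝ} {M : Matrix ι ι ℝ}

lemma hasGaussianLaw_dotProduct (hX : HasCenteredGaussianLaw X M P) (a : ι → ℝ) :
    HasGaussianLaw (fun ω ↦ a ⬝ᵥ X ω) P :=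
  hX.hasGaussianLaw.map_fun (dotProductBilin ℝ ℝ a).toContinuousLinearMap

lemma memLp_dotProduct_mul_dotProduct (hX : HasCenteredGaussianLaw X M P) (a b : ι → ℝ) :
    MemLp (fun ω ↦ (a ⬝ᵥ X ω) * (b ⬝ᵥ X ω)) 2 P := by
  have : ENNReal.HolderTriple 4 4 2 := by
    constructor
    rw [← ENNReal.toReal_eq_toReal_iff' (by simp) (by simp), ENNReal.toReal_add (by simp) (by simp)]
    norm_num
  have memLp_four (v : ι → ℝ) : MemLp (fun ω ↦ v ⬝ᵥ X ω) 4 P :=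
    (hX.hasGaussianLaw_dotProduct v).memLp (by simp)
  exact (memLp_four b).mul' (memLp_four a)

lemma integral_dotProduct_eq_zero (hX : HasCenteredGaussianLaw X M P) (a : ι → ℝ) :
    ∫ ω, a ⬝ᵥ X ω ∂P = 0 := by
  have := hX.hasGaussianLaw.isProbabilityMeasure
  simp only [dotProduct]
  rw [integral_finsetSum _ fun j _ ↦ ((hX.memLp.eval j).integrable one_le_two).const_mul _]
  simp [integral_const_mul, hX.integral_eq_zero]

lemma mulVec [Fintype κ] (hX : HasCenteredGaussianLaw X M P) (A : Matrix κ ι ℝ) :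
    HasCenteredGaussianLaw (fun ω ↦ A *ᵥ X ω) (A * M * Aᵀ) P where
  toHasSecondMoment := hX.toHasSecondMoment.mulVec A
  hasGaussianLaw := hX.hasGaussianLaw.map_fun A.mulVecLin.toContinuousLinearMap
  integral_eq_zero i := hX.integral_dotProduct_eq_zero (A i)

lemma integral_dotProduct_pow_four (hX : HasCenteredGaussianLaw X M P) (a : ι → ℝ) :
    ∫ ω, (a ⬝ᵥ X ω) ^ 4 ∂P = 3 * (a ⬝ᵥ M *ᵥ a) ^ 2 := by
  rw [integral_pow_four_of_hasGaussianLaw (hX.hasGaussianLaw_dotProduct a)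
    (hX.integral_dotProduct_eq_zero a)]
  simp_rw [pow_two, hX.integral_dotProduct_mul_dotProduct]

theorem integral_dotProduct_mul_four (hX : HasCenteredGaussianLaw X M P) (a b c d : ι → ℝ) :
    ∫ ω, (a ⬝ᵥ X ω) * (b ⬝ᵥ X ω) * (c ⬝ᵥ X ω) * (d ⬝ᵥ X ω) ∂P =
      (a ⬝ᵥ M *ᵥ b) * (c ⬝ᵥ M *ᵥ d) + (a ⬝ᵥ M *ᵥ c) * (b ⬝ᵥ M *ᵥ d) +
        (a ⬝ᵥ M *ᵥ d) * (b ⬝ᵥ M *ᵥ c) := by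
  have form_comm (v w : ι → ℝ) : v ⬝ᵥ M *ᵥ w = w ⬝ᵥ M *ᵥ v := by
    rw [dotProduct_mulVec, ← mulVec_transpose, hX.isSymm.eq, dotProduct_comm]
  have polarization (ω : Ω) := sum_signs_mul_pow_four (a ⬝ᵥ X ω) (b ⬝ᵥ X ω) (c ⬝ᵥ X ω) (d ⬝ᵥ X ω)
  have combination (s : ℝ × ℝ × ℝ) (ω : Ω) :
      a ⬝ᵥ X ω + s.1 * b ⬝ᵥ X ω + s.2.1 * c ⬝ᵥ X ω + s.2.2 * d ⬝ᵥ X ω =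
        (a + s.1 • b + s.2.1 • c + s.2.2 • d) ⬝ᵥ X ω := by
    simp
  have integrable (v : ι → ℝ) : Integrable (fun ω ↦ (v ⬝ᵥ X ω) ^ 4) P := by
    convert (hX.memLp_dotProduct_mul_dotProduct v v).integrable_sq using 2
    ring
  refine mul_left_cancel₀ (show (192 : ℝ) ≠ 0 by norm_num) ?_
  simp_rw [← integral_const_mul, ← polarization, combination]
  rw [integral_finsetSum _ fun s _ ↦ (integrable _).const_mul _]
  simp_rw [integral_const_mul, hX.integral_dotProduct_pow_four]
  simp only [Finset.sum_product, Finset.sum_pair (show (1 : ℝ) ≠ -1 by norm_num), add_dotProduct,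
    smul_dotProduct, mulVec_add, mulVec_smul, dotProduct_add, dotProduct_smul, smul_eq_mul,
    form_comm b a, form_comm c a, form_comm d a, form_comm c b, form_comm d b, form_comm d c]
  ring

end HasCenteredGaussianLaw

end CenteredGaussianLaw

section SampleMean

variable {D κ : Type*} [MeasurableSpace D] [Fintype κ] {P : Measure D} [IsProbabilityMeasure P]
  {f g : D → ℝ}

lemma covariance_eval_pi [DecidableEq κ] (hf : MemLp f 2 P) (hg : MemLp g 2 P) (j l : κ) :
    cov[fun z : κ → D ↦ f (z j), fun z ↦ g (z l); Measure.pi fun _ ↦ P] =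
      if j = l then cov[f, g; P] else 0 := by
  have eval (j : κ) := measurePreserving_eval (fun _ : κ ↦ P) j
  have hasLaw (j : κ) := hasLaw_eval_pi (fun _ : κ ↦ P) j
  split_ifs with hjl
  · subst hjl
    exact (hasLaw j).covariance_fun_comp hf.1.aemeasurable hg.1.aemeasurable
  · have indep := (iIndepFun_eval_pi fun _ : κ ↦ P).indepFun hjl
    have indep_comp : IndepFun (fun z ↦ f (z j)) (fun z ↦ g (z l)) (Measure.pi fun _ ↦ P) :=
      indep.comp₀ (hasLaw j).aemeasurable (hasLaw l).aemeasurable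
        ((hasLaw j).map_eq.symm ▸ hf.1.aemeasurable) ((hasLaw l).map_eq.symm ▸ hg.1.aemeasurable)
    exact indep_comp.covariance_eq_zero (hf.comp_measurePreserving (eval j))
      (hg.comp_measurePreserving (eval l))

lemma integral_sampleMean [Nonempty κ] (hf : Integrable f P) :
    ∫ z : κ → D, (Fintype.card κ : ℝ)⁻¹ * ∑ j, f (z j) ∂(Measure.pi fun _ ↦ P) = ∫ x, f x ∂P := by
  rw [integral_const_mul,
    integral_finsetSum _ fun j _ ↦ integrable_comp_eval (μ := fun _ ↦ P) (i := j) hf]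
  simp_rw [integral_comp_eval (μ := fun _ : κ ↦ P) hf.1]
  simp

lemma integral_sampleMean_mul_sampleMean [Nonempty κ] (hf : MemLp f 2 P) (hg : MemLp g 2 P) :
    ∫ z : κ → D, ((Fintype.card κ : ℝ)⁻¹ * ∑ j, f (z j)) * ((Fintype.card κ : ℝ)⁻¹ * ∑ j, g (z j))
        ∂(Measure.pi fun _ ↦ P) =
      (∫ x, f x ∂P) * (∫ x, g x ∂P) + (Fintype.card κ : ℝ)⁻¹ * cov[f, g; P] := by
  classical
  have memLp {h : D → ℝ} (hh : MemLp h 2 P) (j : κ) :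
      MemLp (fun z : κ → D ↦ h (z j)) 2 (Measure.pi fun _ ↦ P) :=
    hh.comp_measurePreserving (measurePreserving_eval (fun _ ↦ P) j)
  have memLp_mean {h : D → ℝ} (hh : MemLp h 2 P) :
      MemLp (fun z : κ → D ↦ (Fintype.card κ : ℝ)⁻¹ * ∑ j, h (z j)) 2 (Measure.pi fun _ ↦ P) :=
    (memLp_finsetSum _ fun j _ ↦ memLp hh j).const_mul _
  have covariance := covariance_eq_sub (memLp_mean hf) (memLp_mean hg)
  rw [covariance_const_mul_left, covariance_const_mul_right,
    covariance_fun_sum_fun_sum (memLp hf) (memLp hg),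
    integral_sampleMean (hf.integrable one_le_two),
    integral_sampleMean (hg.integrable one_le_two)] at covariance
  simp only [covariance_eval_pi hf hg, Finset.sum_ite_eq, Finset.mem_univ, if_true,
    Finset.sum_const, Finset.card_univ, nsmul_eq_mul] at covariance
  have card_ne_zero : (Fintype.card κ : ℝ) ≠ 0 := Nat.cast_ne_zero.2 Fintype.card_ne_zero
  rw [inv_mul_cancel_left₀ card_ne_zero] at covariance
  exact eq_add_of_sub_eq' covariance.symm

end SampleMean

section CenteredNoise

variable {Ω : Type*} [MeasurableSpace Ω] {P : Measure Ω} [IsProbabilityMeasure P]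

lemma integral_const_add_of_integral_eq_zero {E : Type*} [NormedAddCommGroup E] [NormedSpace ℝ E]
    [CompleteSpace E] {Y : Ω → E} (hY : Integrable Y P) (hY0 : ∫ ω, Y ω ∂P = 0) (u : E) :
    ∫ ω, (u + Y ω) ∂P = u := by
  rw [integral_add (integrable_const u) hY, hY0]
  simp

lemma integral_const_add_sq_of_integral_eq_zero {Y : Ω → ℝ} (hY : MemLp Y 2 P)
    (hY0 : ∫ ω, Y ω ∂P = 0) (u : ℝ) : ∫ ω, (u + Y ω) ^ 2 ∂P = u ^ 2 + Var[Y; P] := by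
  have shifted_variance := variance_eq_sub ((memLp_const u).add hY)
  simp only [Pi.pow_apply, Pi.add_apply] at shifted_variance
  rw [integral_const_add_of_integral_eq_zero (hY.integrable one_le_two) hY0] at shifted_variance
  have shift : Var[fun ω ↦ u + Y ω; P] = Var[Y; P] := variance_const_add hY.1 u
  linarith [shifted_variance.symm.trans shift]

end CenteredNoise

section MomEstimator

/-- The method-of-moments estimator `b̂ = n⁻¹ ∑_j y_j x_j` of a linear regression with covariates
`x_j` and responses `y_j`; the samples are indexed by a finite type of cardinality `n`. -/
noncomputable def momEstimator {ι κ : Type*} [Fintype κ] (x : κ → ι → ℝ) (y : κ → ℝ) (i : ι) : ℝ :=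
  (Fintype.card κ : ℝ)⁻¹ * ∑ j, y j * x j i

variable {Ω Ω' ι κ : Type*} [MeasurableSpace Ω] [MeasurableSpace Ω'] [Fintype ι] [Fintype κ]
  {P : Measure Ω} {ν : Measure Ω'} [IsProbabilityMeasure ν]
  {X : Ω → ι → ℝ} {F : Matrix ι ι ℝ} {ε : Ω' → ℝ}

namespace HasCenteredGaussianLaw

lemma memLp_response_mul_dotProduct (hX : HasCenteredGaussianLaw X F P) (hε : MemLp ε 2 ν)
    (b c : ι → ℝ) :
    MemLp (fun p : Ω × Ω' ↦ (b ⬝ᵥ X p.1 + ε p.2) * (c ⬝ᵥ X p.1)) 2 (P.prod ν) := by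
  have := hX.hasGaussianLaw.isProbabilityMeasure
  simp_rw [add_mul, mul_comm (ε _)]
  exact ((hX.memLp_dotProduct_mul_dotProduct b c).comp_fst ν).add
    (memLp_two_mul_prod (hX.hasGaussianLaw_dotProduct c).memLp_two hε)

lemma integral_response_mul_dotProduct (hX : HasCenteredGaussianLaw X F P) (hε : MemLp ε 2 ν)
    (hε0 : ∫ ω, ε ω ∂ν = 0) (b c : ι → ℝ) :
    ∫ p : Ω × Ω', (b ⬝ᵥ X p.1 + ε p.2) * (c ⬝ᵥ X p.1) ∂(P.prod ν) = b ⬝ᵥ F *ᵥ c := by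
  have := hX.hasGaussianLaw.isProbabilityMeasure
  rw [integral_prod _ ((hX.memLp_response_mul_dotProduct hε b c).integrable one_le_two)]
  simp_rw [integral_mul_const,
    integral_const_add_of_integral_eq_zero (hε.integrable one_le_two) hε0,
    hX.integral_dotProduct_mul_dotProduct]

lemma integral_response_sq_mul_dotProduct_mul_dotProduct (hX : HasCenteredGaussianLaw X F P)
    (hε : MemLp ε 2 ν) (hε0 : ∫ ω, ε ω ∂ν = 0) (b c d : ι → ℝ) :
    ∫ p : Ω × Ω', (b ⬝ᵥ X p.1 + ε p.2) ^ 2 * ((c ⬝ᵥ X p.1) * (d ⬝ᵥ X p.1)) ∂(P.prod ν) =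
      (b ⬝ᵥ F *ᵥ b) * (c ⬝ᵥ F *ᵥ d) + 2 * ((b ⬝ᵥ F *ᵥ c) * (b ⬝ᵥ F *ᵥ d)) +
        Var[ε; ν] * (c ⬝ᵥ F *ᵥ d) := by
  have := hX.hasGaussianLaw.isProbabilityMeasure
  have integrable : Integrable
      (fun p : Ω × Ω' ↦ (b ⬝ᵥ X p.1 + ε p.2) ^ 2 * ((c ⬝ᵥ X p.1) * (d ⬝ᵥ X p.1)))
      (P.prod ν) := by
    simp_rw [pow_two, mul_mul_mul_comm (_ + _)]
    exact (hX.memLp_response_mul_dotProduct hε b c).integrable_mul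
      (hX.memLp_response_mul_dotProduct hε b d)
  have signal_integrable : Integrable
      (fun ω ↦ (b ⬝ᵥ X ω) * (b ⬝ᵥ X ω) * (c ⬝ᵥ X ω) * (d ⬝ᵥ X ω)) P := by
    simpa only [Pi.mul_def, mul_assoc] using (hX.memLp_dotProduct_mul_dotProduct b b).integrable_mul
      (hX.memLp_dotProduct_mul_dotProduct c d)
  have noise_integrable : Integrable (fun ω ↦ Var[ε; ν] * ((c ⬝ᵥ X ω) * (d ⬝ᵥ X ω))) P :=
    ((hX.memLp_dotProduct_mul_dotProduct c d).integrable one_le_two).const_mul _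
  rw [integral_prod _ integrable]
  simp_rw [integral_mul_const, integral_const_add_sq_of_integral_eq_zero hε hε0, add_mul, pow_two,
    ← mul_assoc (_ * _) (_ ⬝ᵥ _)]
  rw [integral_add signal_integrable noise_integrable, hX.integral_dotProduct_mul_four,
    integral_const_mul, hX.integral_dotProduct_mul_dotProduct]
  ring

lemma covariance_response_mul_dotProduct (hX : HasCenteredGaussianLaw X F P) (hε : MemLp ε 2 ν)
    (hε0 : ∫ ω, ε ω ∂ν = 0) (b c d : ι → ℝ) :
    cov[fun p : Ω × Ω' ↦ (b ⬝ᵥ X p.1 + ε p.2) * (c ⬝ᵥ X p.1),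
        fun p ↦ (b ⬝ᵥ X p.1 + ε p.2) * (d ⬝ᵥ X p.1); P.prod ν] =
      (b ⬝ᵥ F *ᵥ c) * (b ⬝ᵥ F *ᵥ d) + (b ⬝ᵥ F *ᵥ b) * (c ⬝ᵥ F *ᵥ d) +
        Var[ε; ν] * (c ⬝ᵥ F *ᵥ d) := by
  have := hX.hasGaussianLaw.isProbabilityMeasure
  have regroup (p : Ω × Ω') :
      ((b ⬝ᵥ X p.1 + ε p.2) * (c ⬝ᵥ X p.1)) * ((b ⬝ᵥ X p.1 + ε p.2) * (d ⬝ᵥ X p.1)) =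
        (b ⬝ᵥ X p.1 + ε p.2) ^ 2 * ((c ⬝ᵥ X p.1) * (d ⬝ᵥ X p.1)) := by
    ring
  rw [covariance_eq_sub (hX.memLp_response_mul_dotProduct hε b c)
    (hX.memLp_response_mul_dotProduct hε b d), hX.integral_response_mul_dotProduct hε hε0,
    hX.integral_response_mul_dotProduct hε hε0]
  simp only [Pi.mul_apply, regroup,
    hX.integral_response_sq_mul_dotProduct_mul_dotProduct hε hε0]
  ring

theorem integral_momEstimator_mul_momEstimator [Nonempty κ] (hX : HasCenteredGaussianLaw X F P)
    (hε : MemLp ε 2 ν) (hε0 : ∫ ω, ε ω ∂ν = 0) (b : ι → ℝ) (i k : ι) :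
    ∫ z : (κ → Ω) × (κ → Ω'),
        momEstimator (fun j ↦ X (z.1 j)) (fun j ↦ b ⬝ᵥ X (z.1 j) + ε (z.2 j)) i *
          momEstimator (fun j ↦ X (z.1 j)) (fun j ↦ b ⬝ᵥ X (z.1 j) + ε (z.2 j)) k
        ∂((Measure.pi fun _ ↦ P).prod (Measure.pi fun _ ↦ ν)) =
      (F *ᵥ b) i * (F *ᵥ b) k + (Fintype.card κ : ℝ)⁻¹ *
        ((F *ᵥ b) i * (F *ᵥ b) k + (b ⬝ᵥ F *ᵥ b) * F i k + Var[ε; ν] * F i k) := by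
  classical
  have := hX.hasGaussianLaw.isProbabilityMeasure
  have coord (ω : Ω) (i : ι) : X ω i = Pi.single i 1 ⬝ᵥ X ω := (single_one_dotProduct i _).symm
  have mulVec_apply (i : ι) : b ⬝ᵥ F *ᵥ Pi.single i 1 = (F *ᵥ b) i := by
    rw [dotProduct_mulVec, dotProduct_single_one, ← mulVec_transpose, hX.isSymm.eq]
  have entry : Pi.single i 1 ⬝ᵥ F *ᵥ Pi.single k 1 = F i k := by simp
  have pair_samples := measurePreserving_arrowProdEquivProdArrow Ω Ω' κ (fun _ ↦ P) (fun _ ↦ ν)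
  rw [← pair_samples.integral_comp']
  simp only [momEstimator, coord]
  refine (integral_sampleMean_mul_sampleMean (hX.memLp_response_mul_dotProduct hε b _)
    (hX.memLp_response_mul_dotProduct hε b _)).trans ?_
  rw [hX.integral_response_mul_dotProduct hε hε0, hX.integral_response_mul_dotProduct hε hε0,
    hX.covariance_response_mul_dotProduct hε hε0, mulVec_apply, mulVec_apply, entry]

end HasCenteredGaussianLaw

variable {Ωβ : Type*} [MeasurableSpace Ωβ] {ρ : Measure Ωβ} [IsProbabilityMeasure ρ]
  {β : Ωβ → ι → ℝ} {T : Matrix ι ι ℝ}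

lemma memLp_momEstimator (hβ : HasSecondMoment β T ρ) (hX : HasCenteredGaussianLaw X F P)
    (hε : MemLp ε 2 ν) (i : ι) :
    MemLp (fun ω : Ωβ × (κ → Ω) × (κ → Ω') ↦ momEstimator (fun j ↦ X (ω.2.1 j))
        (fun j ↦ β ω.1 ⬝ᵥ X (ω.2.1 j) + ε (ω.2.2 j)) i) 2
      (ρ.prod ((Measure.pi fun _ ↦ P).prod (Measure.pi fun _ ↦ ν))) := by
  classical
  have := hX.hasGaussianLaw.isProbabilityMeasure
  have single_sample : MemLp (fun p : Ωβ × Ω × Ω' ↦ (β p.1 ⬝ᵥ X p.2.1 + ε p.2.2) * X p.2.1 i) 2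
      (ρ.prod (P.prod ν)) := by
    have product (a : ι) : MemLp (fun ω ↦ X ω a * X ω i) 2 P := by
      simpa using hX.memLp_dotProduct_mul_dotProduct (Pi.single a 1) (Pi.single i 1)
    simp_rw [add_mul, dotProduct, Finset.sum_mul, mul_assoc, mul_comm (ε _)]
    exact (memLp_finsetSum _ fun a _ ↦
        memLp_two_mul_prod (hβ.memLp.eval a) ((product a).comp_fst ν)).add
      ((memLp_two_mul_prod (hX.memLp.eval i) hε).comp_snd ρ)
  have select (j : κ) : MeasurePreserving
      (Prod.map id (Prod.map (Function.eval j) (Function.eval j)))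
      (ρ.prod ((Measure.pi fun _ : κ ↦ P).prod (Measure.pi fun _ : κ ↦ ν))) (ρ.prod (P.prod ν)) :=
    (MeasurePreserving.id ρ).prod
      ((measurePreserving_eval (fun _ ↦ P) j).prod (measurePreserving_eval (fun _ ↦ ν) j))
  exact (memLp_finsetSum _ fun j _ ↦ single_sample.comp_measurePreserving (select j)).const_mul _

theorem mom_single_task_second_moment_general [Nonempty κ] (hβ : HasSecondMoment β T ρ)
    (hX : HasCenteredGaussianLaw X F P) (hε : MemLp ε 2 ν) (hε0 : ∫ ω, ε ω ∂ν = 0) (i k : ι) :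
    ∫ ω : Ωβ × (κ → Ω) × (κ → Ω'),
        momEstimator (fun j ↦ X (ω.2.1 j)) (fun j ↦ β ω.1 ⬝ᵥ X (ω.2.1 j) + ε (ω.2.2 j)) i *
          momEstimator (fun j ↦ X (ω.2.1 j)) (fun j ↦ β ω.1 ⬝ᵥ X (ω.2.1 j) + ε (ω.2.2 j)) k
        ∂(ρ.prod ((Measure.pi fun _ ↦ P).prod (Measure.pi fun _ ↦ ν))) =
      (F * T * F + (Fintype.card κ : ℝ)⁻¹ •
        (F * T * F + (T * F).trace • F + Var[ε; ν] • F)) i k := by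
  have := hX.hasGaussianLaw.isProbabilityMeasure
  have hFβ : HasSecondMoment (fun ω ↦ F *ᵥ β ω) (F * T * F) ρ := by
    simpa only [hX.isSymm.eq] using hβ.mulVec F
  have outer : Integrable (fun ω ↦ (F *ᵥ β ω) i * (F *ᵥ β ω) k) ρ :=
    (hFβ.memLp.eval i).integrable_mul (hFβ.memLp.eval k)
  have energy : Integrable (fun ω ↦ β ω ⬝ᵥ F *ᵥ β ω) ρ :=
    integrable_finsetSum _ fun j _ ↦ (hβ.memLp.eval j).integrable_mul (hFβ.memLp.eval j)
  refine (integral_prod _ ((memLp_momEstimator hβ hX hε i).integrable_mul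
    (memLp_momEstimator hβ hX hε k))).trans ?_
  simp only [Pi.mul_apply, hX.integral_momEstimator_mul_momEstimator hε hε0]
  rw [integral_add outer (by fun_prop), integral_const_mul,
    integral_add (by fun_prop) (by fun_prop), integral_add outer (by fun_prop),
    integral_mul_const, hFβ.integral_mul, hβ.integral_dotProduct_mulVec, trace_mul_comm]
  simp [mul_add]

end MomEstimator

/-- With a random task `β ~ N(0, Σ_T)` (`β = T w`, `Σ_T = T * T`) independent of the
i.i.d. data `x_j ~ N(0, Σ_F)` (`x_j = S z_j`, `Σ_F = S * S`), `ε_j ~ N(0, σ²)`,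
`y_j = x_jᵀ β + ε_j`, the estimator `b̂ = n⁻¹ ∑_j y_j x_j` satisfies
`E[b̂ b̂ᵀ] = Σ_F Σ_T Σ_F + n⁻¹ (Σ_F Σ_T Σ_F + tr(Σ_T Σ_F) Σ_F + σ² Σ_F)`. -/
theorem mom_single_task_second_moment
    {d n : ℕ} (hn : 0 < n)
    (S T : Matrix (Fin d) (Fin d) ℝ) (hS : Sᵀ = S) (hT : Tᵀ = T) (σ : ℝ≥0) :
    ∀ i k : Fin d,
      (∫ ω : (Fin d → ℝ) × (Fin n → Fin d → ℝ) × (Fin n → ℝ),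
          (let β := T.mulVec ω.1
           ((n : ℝ)⁻¹ * ∑ j, (β ⬝ᵥ S.mulVec (ω.2.1 j) + ω.2.2 j) * (S.mulVec (ω.2.1 j)) i) *
           ((n : ℝ)⁻¹ * ∑ j, (β ⬝ᵥ S.mulVec (ω.2.1 j) + ω.2.2 j) * (S.mulVec (ω.2.1 j)) k))
          ∂((Measure.pi fun _ : Fin d => gaussianReal 0 1).prod
             ((Measure.pi fun _ : Fin n => Measure.pi fun _ : Fin d => gaussianReal 0 1).prod
              (Measure.pi fun _ : Fin n => gaussianReal 0 (σ ^ 2))))) =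
        ((S * S) * (T * T) * (S * S) +
          (n : ℝ)⁻¹ •
            ((S * S) * (T * T) * (S * S) +
              ((T * T) * (S * S)).trace • (S * S) + ((σ : ℝ) ^ 2) • (S * S))) i k := by
  intro i k
  have : Nonempty (Fin n) := ⟨⟨0, hn⟩⟩
  have gaussian (A : Matrix (Fin d) (Fin d) ℝ) (hA : Aᵀ = A) : HasCenteredGaussianLaw
      (fun z ↦ A *ᵥ z) (A * A) (Measure.pi fun _ ↦ gaussianReal 0 1) := by
    simpa only [Matrix.mul_one, hA] using hasCenteredGaussianLaw_pi_gaussianReal.mulVec A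
  simpa [momEstimator] using mom_single_task_second_moment_general (κ := Fin n)
    (gaussian T hT).toHasSecondMoment (gaussian S hS)
    (memLp_id_gaussianReal 2 : MemLp (fun x ↦ x) 2 (gaussianReal 0 (σ ^ 2)))
    integral_id_gaussianReal i k
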